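/- arXiv:2105.03805 — 2 statements merged into one kernel-verified Lean document; each statement's English description precedes it below -/
import Mathlib

section
/- Let λ ≥ 0, μ₁ ∈ ℝ and let n be an integer with 2 ≤ n ≤ 4. Then there exists a unique function h ∈ C²((0,∞)) ∩ C¹([0,∞)) satisfying 2r²h(r)h''(r) = (n-1)h(r)(h(r)-1) + r h'(r)(r h'(r) - λr - (n-1)) with h(r) > 0 for all r > 0, together with the initial conditions h(0) = 1 and h'(0) = μ₁. -/
open Set Filter Topology

/-- `h` is a solution of the initial value problem
`2r²h h'' = (n-1)h(h-1) + r h'(r h' - λr - (n-1))`, `h > 0` on `(0,∞)`,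
with `h ∈ C²((0,∞)) ∩ C¹([0,∞))`, `h(0) = 1` and `h'(0) = μ₁`. -/
def IsSol (n : ℕ) (lam μ₁ : ℝ) (h : ℝ → ℝ) : Prop :=
  ContDiffOn ℝ 2 h (Set.Ioi 0) ∧ ContDiffOn ℝ 1 h (Set.Ici 0) ∧
  (∀ r : ℝ, 0 < r →
    2 * r ^ 2 * h r * deriv (deriv h) r =
      ((n : ℝ) - 1) * h r * (h r - 1) +
        r * deriv h r * (r * deriv h r - lam * r - ((n : ℝ) - 1)) ∧ 0 < h r) ∧
  h 0 = 1 ∧ derivWithin h (Set.Ici 0) 0 = μ₁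


noncomputable def Pm (a : ℝ) (G : ℝ → ℝ) (r : ℝ) : ℝ := ∫ τ in (0:ℝ)..1, τ ^ a * G (r * τ)

lemma Pm_cont {a : ℝ} (ha : 0 ≤ a) {G : ℝ → ℝ} (hG : Continuous G) : Continuous (Pm a G) := by
  unfold Pm
  apply intervalIntegral.continuous_parametric_intervalIntegral_of_continuous'
  have := Real.continuous_rpow_const ha
  have h2 : Continuous (fun p : ℝ × ℝ => p.2 ^ a) := this.comp continuous_snd
  exact h2.mul (hG.comp (by fun_prop))

lemma Pm_congr {a : ℝ} {G G' : ℝ → ℝ} {r : ℝ} (hr : 0 ≤ r) (h : ∀ s ∈ Icc 0 r, G s = G' s) :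
    Pm a G r = Pm a G' r := by
  unfold Pm
  apply intervalIntegral.integral_congr
  intro τ hτ
  rw [uIcc_of_le zero_le_one] at hτ
  simp only
  rw [h]
  exact ⟨mul_nonneg hr hτ.1, mul_le_of_le_one_right hr hτ.2⟩

lemma Pm_eq {a : ℝ} {G : ℝ → ℝ} {r : ℝ} (hr : 0 < r) :
    r ^ (a+1) * Pm a G r = ∫ s in (0:ℝ)..r, s ^ a * G s := by
  have h1 := intervalIntegral.mul_integral_comp_mul_left (a := 0) (b := 1) (f := fun s => s ^ a * G s) (c := r)
  simp only [mul_zero, mul_one] at h1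
  rw [← h1]
  unfold Pm
  rw [Real.rpow_add hr, Real.rpow_one, mul_comm (r^a) r, mul_assoc]
  congr 1
  rw [← intervalIntegral.integral_const_mul]
  apply intervalIntegral.integral_congr
  intro τ hτ
  rw [uIcc_of_le zero_le_one] at hτ
  simp only
  rw [Real.mul_rpow hr.le hτ.1]
  ring

lemma Pm_deriv {a : ℝ} (ha : 0 ≤ a) {G : ℝ → ℝ} (hG : Continuous G) {r : ℝ} (hr : 0 < r) :
    HasDerivAt (Pm a G) ((G r - (a+1) * Pm a G r) / r) r := by
  have hc : Continuous (fun s : ℝ => s ^ a * G s) := (Real.continuous_rpow_const ha).mul hG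
  have h1 : HasDerivAt (fun r => ∫ s in (0:ℝ)..r, s ^ a * G s) (r ^ a * G r) r :=
    intervalIntegral.integral_hasDerivAt_right (hc.intervalIntegrable _ _)
      (hc.stronglyMeasurableAtFilter _ _) hc.continuousAt
  have h2 : HasDerivAt (fun r : ℝ => r ^ (-(a+1))) (-(a+1) * r ^ (-(a+1) - 1)) r :=
    Real.hasDerivAt_rpow_const (Or.inl hr.ne')
  have h3 := h2.mul h1
  have h4 : (fun r : ℝ => r ^ (-(a+1)) * ∫ s in (0:ℝ)..r, s ^ a * G s) =ᶠ[𝓝 r] Pm a G := by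
    filter_upwards [Ioi_mem_nhds hr] with x hx
    rw [← Pm_eq hx, ← mul_assoc, ← Real.rpow_add hx]
    simp
  have h5 := h3.congr_of_eventuallyEq h4.symm
  refine h5.congr_deriv ?_
  rw [← Pm_eq hr]
  have e1 : r ^ (-(a+1)) * r ^ a = r⁻¹ := by
    rw [← Real.rpow_add hr, ← Real.rpow_neg_one]; congr 1; ring
  have e2 : r ^ (-(a+1) - 1) * r ^ (a+1) = r⁻¹ := by
    rw [← Real.rpow_add hr, ← Real.rpow_neg_one]; congr 1; ring
  have e3 : r ^ (-(a+1)) * (r ^ a * G r) = r⁻¹ * G r := by rw [← mul_assoc, e1]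
  have e4 : -(a+1) * r ^ (-(a+1) - 1) * (r ^ (a+1) * Pm a G r) = -(a+1) * r⁻¹ * Pm a G r := by
    rw [← e2]; ring
  rw [e3, e4]; field_simp; ring

noncomputable def Io (μ : ℝ) (k : ℝ → ℝ) (s : ℝ) : ℝ := μ + ∫ x in (0:ℝ)..s, k x

lemma Io_deriv {μ : ℝ} {k : ℝ → ℝ} (hk : Continuous k) (r : ℝ) : HasDerivAt (Io μ k) (k r) r := by
  unfold Io
  exact (intervalIntegral.integral_hasDerivAt_right (hk.intervalIntegrable _ _)
      (hk.stronglyMeasurableAtFilter _ _) hk.continuousAt).const_add μ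

lemma Io_cont {μ : ℝ} {k : ℝ → ℝ} (hk : Continuous k) : Continuous (Io μ k) :=
  continuous_iff_continuousAt.2 fun r => (Io_deriv hk r).continuousAt

lemma Io_zero {μ : ℝ} {k : ℝ → ℝ} : Io μ k 0 = μ := by simp [Io]

lemma Io_congr {μ : ℝ} {k k' : ℝ → ℝ} {r : ℝ} (hr : 0 ≤ r) (h : ∀ s ∈ Icc 0 r, k s = k' s) :
    Io μ k r = Io μ k' r := by
  unfold Io
  congr 1
  apply intervalIntegral.integral_congr
  rw [uIcc_of_le hr]
  exact h

/-- the integrand along `k` -/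
noncomputable def Gk (Φ : ℝ → ℝ → ℝ → ℝ) (μ : ℝ) (k : ℝ → ℝ) (s : ℝ) : ℝ :=
  Φ s (Io μ k s) (Io μ k s + s * k s)

lemma Gk_cont {Φ : ℝ → ℝ → ℝ → ℝ} (hΦ : Continuous (fun p : ℝ × ℝ × ℝ => Φ p.1 p.2.1 p.2.2))
    {μ : ℝ} {k : ℝ → ℝ} (hk : Continuous k) : Continuous (Gk Φ μ k) := by
  have := Io_cont (μ := μ) hk
  exact hΦ.comp (f := fun s => (s, Io μ k s, Io μ k s + s * k s)) (by fun_prop)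

lemma int_exp {M r : ℝ} (hM : 0 < M) :
    ∫ x in (0:ℝ)..r, Real.exp (M * x) = (Real.exp (M * r) - 1) / M := by
  have : ∀ x ∈ uIcc 0 r, HasDerivAt (fun x => Real.exp (M * x) / M) (Real.exp (M * x)) x := by
    intro x _
    have := (((hasDerivAt_id x).const_mul M).exp).div_const M
    refine this.congr_deriv ?_
    simp only [id]; field_simp
  rw [intervalIntegral.integral_eq_sub_of_hasDerivAt this
    (Continuous.intervalIntegrable (by fun_prop) _ _)]
  simp; ring

lemma core_est {Φ : ℝ → ℝ → ℝ → ℝ} (hΦ : Continuous (fun p : ℝ × ℝ × ℝ => Φ p.1 p.2.1 p.2.2))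
    {L : ℝ} (hL : 0 ≤ L)
    (hlip : ∀ s f₁ P₁ f₂ P₂, |Φ s f₁ P₁ - Φ s f₂ P₂| ≤ L * (|f₁ - f₂| + |P₁ - P₂|))
    {a μ : ℝ} (ha : 0 ≤ a) {k₁ k₂ : ℝ → ℝ} (h₁ : Continuous k₁) (h₂ : Continuous k₂)
    {M D r : ℝ} (hM : 0 < M) (hD : 0 ≤ D) (hr : 0 ≤ r)
    (hd : ∀ s ∈ Icc 0 r, |k₁ s - k₂ s| ≤ D * Real.exp (M * s)) :
    |Pm a (Gk Φ μ k₁) r - Pm a (Gk Φ μ k₂) r| ≤ 3 * L / M * (D * Real.exp (M * r)) := by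
  have hI : ∀ s ∈ Icc 0 r, |Io μ k₁ s - Io μ k₂ s| ≤ D * Real.exp (M * r) / M := by
    intro s hs
    have e : Io μ k₁ s - Io μ k₂ s = ∫ x in (0:ℝ)..s, (k₁ x - k₂ x) := by
      rw [intervalIntegral.integral_sub (h₁.intervalIntegrable _ _) (h₂.intervalIntegrable _ _)]
      unfold Io; ring
    rw [e]
    have := intervalIntegral.norm_integral_le_of_norm_le (μ := MeasureTheory.volume)
      (f := fun x => k₁ x - k₂ x)
      (g := fun x => D * Real.exp (M * x)) hs.1
      (Filter.Eventually.of_forall (fun x hx => hd x ⟨hx.1.le, hx.2.trans hs.2⟩))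
      (Continuous.intervalIntegrable (by fun_prop) _ _)
    rw [intervalIntegral.integral_const_mul, int_exp hM] at this
    refine this.trans ?_
    rw [mul_div_assoc]
    have h3 : Real.exp (M * s) ≤ Real.exp (M * r) := Real.exp_le_exp.2 (by nlinarith [hs.2])
    gcongr
    linarith
  have c1 := Gk_cont hΦ (μ := μ) h₁
  have c2 := Gk_cont hΦ (μ := μ) h₂
  have ca := Real.continuous_rpow_const ha
  have e : Pm a (Gk Φ μ k₁) r - Pm a (Gk Φ μ k₂) r =
      ∫ τ in (0:ℝ)..1, (τ ^ a * (Gk Φ μ k₁ (r * τ) - Gk Φ μ k₂ (r * τ))) := by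
    unfold Pm
    rw [← intervalIntegral.integral_sub]
    · congr 1; ext τ; ring
    · exact (ca.mul (c1.comp (by fun_prop))).intervalIntegrable _ _
    · exact (ca.mul (c2.comp (by fun_prop))).intervalIntegrable _ _
  rw [e]
  have key := intervalIntegral.norm_integral_le_of_norm_le (μ := MeasureTheory.volume)
      (f := fun τ => τ ^ a * (Gk Φ μ k₁ (r * τ) - Gk Φ μ k₂ (r * τ)))
      (g := fun τ => 2 * L * (D * Real.exp (M * r) / M) + L * D * (r * Real.exp (M * (r * τ))))
      (a := 0) (b := 1) zero_le_one
      (Filter.Eventually.of_forall (fun τ hτ => ?_))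
      (Continuous.intervalIntegrable (by fun_prop) _ _)
  · refine key.trans ?_
    rw [intervalIntegral.integral_add (Continuous.intervalIntegrable (by fun_prop) _ _)
      (Continuous.intervalIntegrable (by fun_prop) _ _), intervalIntegral.integral_const_mul,
      intervalIntegral.integral_const_mul, intervalIntegral.integral_const_mul,
      intervalIntegral.mul_integral_comp_mul_left (f := fun x => Real.exp (M * x)), mul_zero, mul_one,
      int_exp hM, intervalIntegral.integral_const]
    have : L * D * ((Real.exp (M*r) - 1)/M) ≤ L * D * (Real.exp (M*r) / M) := by
      gcongr; linarith
    simp only [sub_zero, one_smul]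
    calc _ ≤ 2 * L * (D * Real.exp (M * r) / M) + L * D * (Real.exp (M*r) / M) := by linarith
      _ = _ := by ring
  · have hs : r * τ ∈ Icc 0 r := ⟨mul_nonneg hr hτ.1.le, mul_le_of_le_one_right hr hτ.2⟩
    have t1 : τ ^ a ≤ 1 := Real.rpow_le_one hτ.1.le hτ.2 ha
    have t0 : 0 ≤ τ ^ a := Real.rpow_nonneg hτ.1.le a
    simp only [norm_mul, Real.norm_eq_abs, abs_of_nonneg t0]
    refine (mul_le_of_le_one_left (abs_nonneg _) t1).trans ?_
    refine (hlip _ _ _ _ _).trans ?_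
    have i1 := hI _ hs
    have i2 := hd _ hs
    have i3 : |(Io μ k₁ (r*τ) + r*τ * k₁ (r*τ)) - (Io μ k₂ (r*τ) + r*τ * k₂ (r*τ))| ≤
        D * Real.exp (M * r) / M + r * (D * Real.exp (M * (r*τ))) := by
      have : (Io μ k₁ (r*τ) + r*τ * k₁ (r*τ)) - (Io μ k₂ (r*τ) + r*τ * k₂ (r*τ)) =
        (Io μ k₁ (r*τ) - Io μ k₂ (r*τ)) + r*τ * (k₁ (r*τ) - k₂ (r*τ)) := by ring
      rw [this]
      refine (abs_add_le _ _).trans (add_le_add i1 ?_)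
      rw [abs_mul, abs_of_nonneg hs.1]
      exact mul_le_mul hs.2 i2 (abs_nonneg _) hr
    calc _ ≤ L * (D * Real.exp (M * r) / M + (D * Real.exp (M * r) / M + r * (D * Real.exp (M * (r*τ))))) := by
          gcongr
      _ = _ := by ring

lemma trunc_unique {Φ : ℝ → ℝ → ℝ → ℝ} (hΦ : Continuous (fun p : ℝ × ℝ × ℝ => Φ p.1 p.2.1 p.2.2))
    {L : ℝ} (hL : 0 ≤ L)
    (hlip : ∀ s f₁ P₁ f₂ P₂, |Φ s f₁ P₁ - Φ s f₂ P₂| ≤ L * (|f₁ - f₂| + |P₁ - P₂|))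
    {a μ : ℝ} (ha : 0 ≤ a) {k₁ k₂ : ℝ → ℝ} (h₁ : Continuous k₁) (h₂ : Continuous k₂)
    {R : ℝ} (hR : 0 ≤ R) (e₁ : ∀ r ∈ Icc 0 R, k₁ r = Pm a (Gk Φ μ k₁) r)
    (e₂ : ∀ r ∈ Icc 0 R, k₂ r = Pm a (Gk Φ μ k₂) r) : ∀ r ∈ Icc 0 R, k₁ r = k₂ r := by
  set M := 6 * L + 1 with hM
  have hM0 : 0 < M := by positivity
  obtain ⟨x, hx, hmax⟩ := isCompact_Icc.exists_isMaxOn (nonempty_Icc.2 hR)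
    (f := fun r => |k₁ r - k₂ r| * Real.exp (-(M * r))) (by fun_prop)
  set D := |k₁ x - k₂ x| * Real.exp (-(M * x)) with hD
  have hD0 : 0 ≤ D := by positivity
  have hd : ∀ s ∈ Icc 0 R, |k₁ s - k₂ s| ≤ D * Real.exp (M * s) := by
    intro s hs
    have := hmax hs
    have h' : |k₁ s - k₂ s| * Real.exp (-(M * s)) ≤ D := this
    rwa [Real.exp_neg, ← div_eq_mul_inv, div_le_iff₀ (Real.exp_pos _)] at h'
  have est := core_est hΦ hL hlip (μ := μ) ha h₁ h₂ hM0 hD0 hx.1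
    (fun s hs => hd s ⟨hs.1, hs.2.trans hx.2⟩)
  rw [← e₁ x hx, ← e₂ x hx] at est
  have hx2 : |k₁ x - k₂ x| = D * Real.exp (M * x) := by
    rw [hD, mul_assoc, ← Real.exp_add]; simp
  rw [hx2] at est
  have h3 : 3 * L / M ≤ 1/2 := by
    rw [div_le_iff₀ hM0]; linarith
  have hDz : D = 0 := by
    have hp := Real.exp_pos (M*x)
    have : D * Real.exp (M*x) ≤ 1/2 * (D * Real.exp (M*x)) :=
      est.trans (by gcongr)
    nlinarith
  intro r hr
  have := hd r hr
  rw [hDz, zero_mul] at this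
  exact sub_eq_zero.1 (abs_eq_zero.1 (le_antisymm this (abs_nonneg _)))

lemma trunc_exists {Φ : ℝ → ℝ → ℝ → ℝ} (hΦ : Continuous (fun p : ℝ × ℝ × ℝ => Φ p.1 p.2.1 p.2.2))
    {L B : ℝ} (hL : 0 ≤ L) (hB : ∀ s f P, |Φ s f P| ≤ B)
    (hlip : ∀ s f₁ P₁ f₂ P₂, |Φ s f₁ P₁ - Φ s f₂ P₂| ≤ L * (|f₁ - f₂| + |P₁ - P₂|))
    {a : ℝ} (μ : ℝ) (ha : 0 ≤ a) :
    ∃ k : ℝ → ℝ, Continuous k ∧ ∀ r, 0 ≤ r → k r = Pm a (Gk Φ μ k) r := by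
  set M := 6 * L + 1 with hM
  have hM0 : 0 < M := by positivity
  have ca := Real.continuous_rpow_const ha
  let up : BoundedContinuousFunction ℝ ℝ → ℝ → ℝ := fun κ r => Real.exp (M * r) * κ r
  have hup : ∀ κ, Continuous (up κ) := fun κ => by
    have := κ.continuous
    simp only [up]; fun_prop
  have hbd : ∀ k, Continuous k → ∀ r, |Pm a (Gk Φ μ k) r| ≤ B := by
    intro k hk r
    have := intervalIntegral.norm_integral_le_of_norm_le_const (a := 0) (b := 1) (C := B)
      (f := fun τ => τ ^ a * Gk Φ μ k (r * τ)) (fun τ hτ => by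
        rw [uIoc_of_le zero_le_one] at hτ
        have t1 : τ ^ a ≤ 1 := Real.rpow_le_one hτ.1.le hτ.2 ha
        have t0 : 0 ≤ τ ^ a := Real.rpow_nonneg hτ.1.le a
        simp only [norm_mul, Real.norm_eq_abs, abs_of_nonneg t0]
        exact (mul_le_of_le_one_left (abs_nonneg _) t1).trans (hB _ _ _))
    simpa [Pm] using this
  have hTc : ∀ κ, Continuous (fun r => Real.exp (-(M * |r|)) * Pm a (Gk Φ μ (up κ)) |r|) := by
    intro κ
    have := Pm_cont ha (Gk_cont hΦ (μ := μ) (hup κ))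
    fun_prop
  let T : BoundedContinuousFunction ℝ ℝ → BoundedContinuousFunction ℝ ℝ := fun κ =>
    BoundedContinuousFunction.ofNormedAddCommGroup
      (fun r => Real.exp (-(M * |r|)) * Pm a (Gk Φ μ (up κ)) |r|) (hTc κ) B (by
        intro r
        rw [norm_mul, Real.norm_eq_abs, Real.norm_eq_abs, abs_of_pos (Real.exp_pos _)]
        refine (mul_le_of_le_one_left (abs_nonneg _) ?_).trans (hbd _ (hup κ) _)
        rw [Real.exp_le_one_iff]
        have := abs_nonneg r
        nlinarith)
  have hT : ContractingWith (1/2) T := by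
    refine ⟨by rw [← NNReal.coe_lt_coe]; norm_num, LipschitzWith.of_dist_le_mul fun κ₁ κ₂ => ?_⟩
    rw [BoundedContinuousFunction.dist_le (by positivity)]
    intro r
    have est := core_est hΦ hL hlip (μ := μ) ha (hup κ₁) (hup κ₂) hM0 (dist_nonneg (x := κ₁) (y := κ₂))
      (abs_nonneg r) (fun s hs => by
        simp only [up]
        rw [← mul_sub, abs_mul, abs_of_pos (Real.exp_pos _), mul_comm]
        gcongr
        exact BoundedContinuousFunction.dist_coe_le_dist (f := κ₁) (g := κ₂) s)
    simp only [T, BoundedContinuousFunction.coe_ofNormedAddCommGroup, Real.dist_eq]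
    rw [← mul_sub, abs_mul, abs_of_pos (Real.exp_pos _)]
    have h3 : 3 * L / M ≤ 1/2 := by
      rw [div_le_iff₀ hM0]; linarith
    calc _ ≤ Real.exp (-(M*|r|)) * (3 * L / M * (dist κ₁ κ₂ * Real.exp (M * |r|))) := by gcongr
      _ = 3 * L / M * dist κ₁ κ₂ * (Real.exp (-(M*|r|)) * Real.exp (M * |r|)) := by ring
      _ = 3 * L / M * dist κ₁ κ₂ := by rw [← Real.exp_add]; simp
      _ ≤ _ := by
        have : (((1/2 : NNReal)) : ℝ) = 1/2 := by norm_num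
        rw [this]; gcongr
  set κ := ContractingWith.fixedPoint T hT with hκ
  have hfix : T κ = κ := hT.fixedPoint_isFixedPt
  refine ⟨up κ, hup κ, fun r hr => ?_⟩
  have h4 : κ r = Real.exp (-(M * |r|)) * Pm a (Gk Φ μ (up κ)) |r| := by
    conv_lhs => rw [← hfix]
    rfl
  rw [abs_of_nonneg hr] at h4
  show Real.exp (M * r) * κ r = _
  rw [h4, ← mul_assoc, ← Real.exp_add]
  simp


noncomputable def cl (A x : ℝ) : ℝ := max (-A) (min A x)

lemma cl_lip (A x y : ℝ) : |cl A x - cl A y| ≤ |x - y| := by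
  unfold cl
  rcases le_total x y with h | h <;> rcases le_total A x with h1 | h1 <;>
    rcases le_total A y with h2 | h2 <;>
    simp only [h1, h2, min_eq_left, min_eq_right] <;>
    simp only [max_def] <;> split_ifs <;> simp only [abs_le, le_abs] <;> grind

lemma cl_abs {A : ℝ} (hA : 0 ≤ A) (x : ℝ) : |cl A x| ≤ A := by
  unfold cl
  rw [abs_le]
  exact ⟨le_max_left _ _, max_le (by linarith) (min_le_left _ _)⟩

lemma cl_eq {A x : ℝ} (h : |x| ≤ A) : cl A x = x := by
  unfold cl
  rw [abs_le] at h
  rw [min_eq_right h.2, max_eq_right h.1]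

lemma cl_zero {A : ℝ} (hA : 0 ≤ A) : cl A 0 = 0 := cl_eq (by simpa)

lemma cl_pos_le {A x : ℝ} (hA : 0 ≤ A) (hx : 0 ≤ x) : 0 ≤ cl A x ∧ cl A x ≤ x := by
  unfold cl
  exact ⟨le_max_of_le_right (le_min hA hx), max_le (by linarith) (min_le_right _ _)⟩

lemma cl_nonpos {A x : ℝ} (hA : 0 ≤ A) (hx : x ≤ 0) : cl A x ≤ 0 := by
  unfold cl
  exact max_le (by linarith) ((min_le_right _ _).trans hx)

lemma cl_cont (A : ℝ) : Continuous (cl A) := by unfold cl; fun_prop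

noncomputable def Fu (b lam s f P : ℝ) : ℝ := P * (b * f + P - lam) / (2 * (1 + s * f))

noncomputable def Ft (A ε R b lam s f P : ℝ) : ℝ :=
  cl A P * (b * cl A f + cl A P - lam) / (2 * max (1 + max 0 (min R s) * f) ε)

lemma Ft_eq {A ε R b lam s f P : ℝ} (hs : s ∈ Icc 0 R) (hf : |f| ≤ A) (hP : |P| ≤ A)
    (hh : ε ≤ 1 + s * f) : Ft A ε R b lam s f P = Fu b lam s f P := by
  unfold Ft Fu
  rw [cl_eq hf, cl_eq hP, min_eq_right hs.2, max_eq_right hs.1, max_eq_left hh]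

lemma Ft_cont {A ε R b lam : ℝ} (hε : 0 < ε) :
    Continuous (fun p : ℝ × ℝ × ℝ => Ft A ε R b lam p.1 p.2.1 p.2.2) := by
  unfold Ft
  have := cl_cont A
  refine Continuous.div (by fun_prop) (by fun_prop) ?_
  intro p
  have : ε ≤ max (1 + max 0 (min R p.1) * p.2.1) ε := le_max_right _ _
  have : 0 < max (1 + max 0 (min R p.1) * p.2.1) ε := by linarith
  positivity

lemma num_bound {A b lam f P : ℝ} (hb : 0 ≤ b) (hl : 0 ≤ lam) (hA : 0 ≤ A)
    (hf : |f| ≤ A) (hP : |P| ≤ A) : |P * (b * f + P - lam)| ≤ A * (b * A + A + lam) := by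
  rw [abs_mul]
  have : |b * f + P - lam| ≤ b * A + A + lam := by
    refine (abs_sub _ _).trans ?_
    rw [abs_of_nonneg hl]
    refine add_le_add ((abs_add_le _ _).trans (add_le_add ?_ hP)) le_rfl
    rw [abs_mul, abs_of_nonneg hb]; gcongr
  gcongr

lemma den_bound {ε x : ℝ} (hε : 0 < ε) : |1 / (2 * max x ε)| ≤ 1 / ε := by
  have h : ε ≤ max x ε := le_max_right _ _
  have : 0 < max x ε := by linarith
  rw [abs_of_pos (by positivity)]
  exact one_div_le_one_div_of_le hε (by linarith)

lemma den_lip {ε x y : ℝ} (hε : 0 < ε) :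
    |1 / (2 * max x ε) - 1 / (2 * max y ε)| ≤ |x - y| / (ε * ε) := by
  have h : ε ≤ max x ε := le_max_right _ _
  have h' : ε ≤ max y ε := le_max_right _ _
  have p : 0 < max x ε := by linarith
  have p' : 0 < max y ε := by linarith
  have e : 1 / (2 * max x ε) - 1 / (2 * max y ε) =
    (max y ε - max x ε) / (2 * (max x ε * max y ε)) := by field_simp
  rw [e, abs_div, abs_of_pos (by positivity : 0 < 2 * (max x ε * max y ε))]
  have l : |max y ε - max x ε| ≤ |x - y| := by
    rw [abs_sub_comm x y]
    exact abs_max_sub_max_le_abs _ _ _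
  have m : ε * ε ≤ max x ε * max y ε := by gcongr
  exact div_le_div₀ (abs_nonneg _) l (by positivity) (by nlinarith [mul_pos p p'])

lemma Ft_bdd {A ε R b lam : ℝ} (hε : 0 < ε) (hb : 0 ≤ b) (hl : 0 ≤ lam) (hA : 0 ≤ A) :
    ∀ s f P, |Ft A ε R b lam s f P| ≤ A * (b * A + A + lam) * (1 / ε) := by
  intro s f P
  unfold Ft
  rw [div_eq_mul_one_div, abs_mul]
  exact mul_le_mul (num_bound hb hl hA (cl_abs hA _) (cl_abs hA _)) (den_bound hε) (abs_nonneg _)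
    (by positivity)

lemma num_lip {A b lam f₁ P₁ f₂ P₂ : ℝ} (hb : 0 ≤ b) (hl : 0 ≤ lam) (hA : 0 ≤ A)
    (hf : |f₁| ≤ A) (hP : |P₁| ≤ A) (hP₂ : |P₂| ≤ A) :
    |P₁ * (b * f₁ + P₁ - lam) - P₂ * (b * f₂ + P₂ - lam)| ≤
      (b * A + 2 * A + lam) * (|f₁ - f₂| + |P₁ - P₂|) := by
  have e : P₁ * (b * f₁ + P₁ - lam) - P₂ * (b * f₂ + P₂ - lam) =
    (P₁ - P₂) * (b * f₁ + P₁ + P₂ - lam) + P₂ * b * (f₁ - f₂) := by ring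
  rw [e]
  have h1 : |b * f₁ + P₁ + P₂ - lam| ≤ b * A + 2 * A + lam := by
    rw [abs_le] at *
    constructor <;> nlinarith
  have h2 : |P₂ * b| ≤ b * A + 2 * A + lam := by
    rw [abs_mul, abs_of_nonneg hb]
    nlinarith [abs_nonneg P₂]
  calc _ ≤ |(P₁ - P₂) * (b * f₁ + P₁ + P₂ - lam)| + |P₂ * b * (f₁ - f₂)| := abs_add_le _ _
    _ = |P₁ - P₂| * |b * f₁ + P₁ + P₂ - lam| + |P₂ * b| * |f₁ - f₂| := by rw [abs_mul, abs_mul (P₂ * b)]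
    _ ≤ |P₁ - P₂| * (b * A + 2 * A + lam) + (b * A + 2 * A + lam) * |f₁ - f₂| := by gcongr
    _ = _ := by ring

lemma Ft_lip {A ε R b lam : ℝ} (hε : 0 < ε) (hb : 0 ≤ b) (hl : 0 ≤ lam) (hA : 0 ≤ A) (hR : 0 ≤ R) :
    ∃ L, 0 ≤ L ∧ ∀ s f₁ P₁ f₂ P₂, |Ft A ε R b lam s f₁ P₁ - Ft A ε R b lam s f₂ P₂| ≤
      L * (|f₁ - f₂| + |P₁ - P₂|) := by
  refine ⟨(b * A + 2 * A + lam) * (1 / ε) + A * (b * A + A + lam) * (R / (ε * ε)),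
    by positivity, ?_⟩
  intro s f₁ P₁ f₂ P₂
  unfold Ft
  set N₁ := cl A P₁ * (b * cl A f₁ + cl A P₁ - lam)
  set N₂ := cl A P₂ * (b * cl A f₂ + cl A P₂ - lam) with hN₂
  set t := max 0 (min R s)
  have ht : 0 ≤ t ∧ t ≤ R := ⟨le_max_left _ _, max_le hR (min_le_left _ _)⟩
  have hN : |N₁ - N₂| ≤ (b * A + 2 * A + lam) * (|f₁ - f₂| + |P₁ - P₂|) := by
    refine (num_lip hb hl hA (cl_abs hA _) (cl_abs hA _) (cl_abs hA _)).trans ?_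
    have := cl_lip A f₁ f₂
    have := cl_lip A P₁ P₂
    gcongr
  have hN2 : |N₂| ≤ A * (b * A + A + lam) := num_bound hb hl hA (cl_abs hA _) (cl_abs hA _)
  rw [div_eq_mul_one_div N₁, div_eq_mul_one_div N₂]
  set d₁ := 1 / (2 * max (1 + t * f₁) ε) with hd₁
  set d₂ := 1 / (2 * max (1 + t * f₂) ε) with hd₂
  have hd : |d₁| ≤ 1 / ε := den_bound hε
  have hdd : |d₁ - d₂| ≤ R / (ε * ε) * (|f₁ - f₂| + |P₁ - P₂|) := by
    refine (den_lip hε).trans ?_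
    have : 1 + t * f₁ - (1 + t * f₂) = t * (f₁ - f₂) := by ring
    rw [this, abs_mul, abs_of_nonneg ht.1, div_mul_eq_mul_div]
    have := abs_nonneg (P₁ - P₂)
    gcongr
    · exact ht.2
    · linarith
  have e : N₁ * d₁ - N₂ * d₂ = (N₁ - N₂) * d₁ + N₂ * (d₁ - d₂) := by ring
  rw [e]
  calc _ ≤ |(N₁ - N₂) * d₁| + |N₂ * (d₁ - d₂)| := abs_add_le _ _
    _ = |N₁ - N₂| * |d₁| + |N₂| * |d₁ - d₂| := by rw [abs_mul, abs_mul]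
    _ ≤ ((b * A + 2 * A + lam) * (|f₁ - f₂| + |P₁ - P₂|)) * (1 / ε) +
        (A * (b * A + A + lam)) * (R / (ε * ε) * (|f₁ - f₂| + |P₁ - P₂|)) := by gcongr
    _ = _ := by ring

lemma sign_lemma {b μ : ℝ} (hb : 0 < b) (hμ : 0 < μ) {f P : ℝ → ℝ} (hP : Continuous P)
    (hP0 : P 0 = μ) (hf0 : f 0 = μ) (hd : ∀ r, HasDerivAt (fun r => r * f r) (P r) r)
    (hz : ∀ r, 0 < r → P r = 0 → HasDerivAt P (b * f r / (2 * r)) r) :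
    ∀ r, 0 ≤ r → 0 < P r ∧ 0 < f r := by
  have hcd : Continuous (fun r => r * f r) :=
    continuous_iff_continuousAt.2 fun r => (hd r).continuousAt
  have stepA : ∀ r, 0 < r → (∀ x ∈ Ico 0 r, 0 < P x) → 0 < f r := by
    intro r hr hx
    have hm : StrictMonoOn (fun r => r * f r) (Icc 0 r) := by
      refine strictMonoOn_of_deriv_pos (convex_Icc 0 r) hcd.continuousOn ?_
      intro x hxi
      rw [interior_Icc] at hxi
      rw [(hd x).deriv]
      exact hx x ⟨hxi.1.le, hxi.2⟩
    have := hm (left_mem_Icc.2 hr.le) (right_mem_Icc.2 hr.le) hr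
    simp only [zero_mul] at this
    exact pos_of_mul_pos_right this hr.le
  have stepB : ∀ r, 0 ≤ r → 0 < P r := by
    by_contra! hcon
    obtain ⟨r₀, hr₀, hPr₀⟩ := hcon
    set Z := {r | 0 ≤ r ∧ P r ≤ 0} with hZ
    have hZc : IsClosed Z :=
      (isClosed_le continuous_const continuous_id).inter (isClosed_le hP continuous_const)
    have hZb : BddBelow Z := ⟨0, fun x hx => hx.1⟩
    have hmem : sInf Z ∈ Z := hZc.csInf_mem ⟨r₀, hr₀, hPr₀⟩ hZb
    set r₁ := sInf Z
    have hr1 : 0 < r₁ := by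
      rcases hmem.1.lt_or_eq with h | h
      · exact h
      · have := hmem.2
        rw [← h, hP0] at this
        linarith
    have hlt : ∀ x ∈ Ico 0 r₁, 0 < P x := by
      intro x hx
      by_contra! hc
      exact absurd (csInf_le hZb (show x ∈ Z from ⟨hx.1, hc⟩)) (not_le.2 hx.2)
    have hev : ∀ᶠ x in 𝓝[<] r₁, 0 < P x := by
      filter_upwards [Ioo_mem_nhdsLT hr1] with x hx
      exact hlt x ⟨hx.1.le, hx.2⟩
    have hge : 0 ≤ P r₁ :=
      ge_of_tendsto (hP.continuousAt.tendsto.mono_left nhdsWithin_le_nhds)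
        (hev.mono fun x hx => hx.le)
    have hP1 : P r₁ = 0 := le_antisymm hmem.2 hge
    have hfp := stepA r₁ hr1 hlt
    have hder := hz r₁ hr1 hP1
    have hc : 0 < b * f r₁ / (2 * r₁) := by positivity
    have ht := (hasDerivAt_iff_tendsto_slope.1 hder).mono_left
      (nhdsWithin_mono r₁ (fun x (hx : x < r₁) => ne_of_lt hx) : 𝓝[<] r₁ ≤ 𝓝[≠] r₁)
    have : b * f r₁ / (2 * r₁) ≤ 0 := by
      refine le_of_tendsto ht ?_
      filter_upwards [hev, self_mem_nhdsWithin] with x hx hx2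
      rw [slope_def_field, hP1, sub_zero]
      exact div_nonpos_of_nonneg_of_nonpos hx.le (by have : x < r₁ := hx2; linarith)
    linarith
  intro r hr
  refine ⟨stepB r hr, ?_⟩
  rcases hr.lt_or_eq with h | h
  · exact stepA r h fun x hx => stepB x hx.1
  · rw [← h, hf0]; exact hμ

lemma h_deriv {μ : ℝ} {k : ℝ → ℝ} (hk : Continuous k) (r : ℝ) :
    HasDerivAt (fun r => r * Io μ k r) (Io μ k r + r * k r) r := by
  refine ((hasDerivAt_id r).mul (Io_deriv (μ := μ) hk r)).congr_deriv ?_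
  simp

lemma P_deriv {b μ : ℝ} (hb : 0 ≤ b) {k G : ℝ → ℝ} (hk : Continuous k) (hG : Continuous G)
    (he : ∀ r, 0 ≤ r → k r = Pm (b/2+1) G r) {r : ℝ} (hr : 0 < r) :
    HasDerivAt (fun r => Io μ k r + r * k r) (-(b/2) * k r + G r) r := by
  have h1 := Pm_deriv (a := b/2+1) (by positivity) hG hr
  have h2 : HasDerivAt k ((G r - (b/2+1+1) * Pm (b/2+1) G r) / r) r := by
    refine h1.congr_of_eventuallyEq ?_
    filter_upwards [Ioi_mem_nhds hr] with x hx
    exact he x (le_of_lt hx)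
  rw [← he r hr.le] at h2
  refine ((Io_deriv (μ := μ) hk r).add ((hasDerivAt_id r).mul h2)).congr_deriv ?_
  simp only [id]
  field_simp
  ring

def SolR (b lam μ R : ℝ) (k : ℝ → ℝ) : Prop :=
  Continuous k ∧ (∀ r ∈ Icc 0 R, 0 < 1 + r * Io μ k r) ∧
    ∀ r ∈ Icc 0 R, k r = Pm (b/2+1) (Gk (Fu b lam) μ k) r

lemma S_deriv {b μ : ℝ} (hb : 0 ≤ b) {k G : ℝ → ℝ} (hk : Continuous k) (hG : Continuous G)
    (he : ∀ r, 0 ≤ r → k r = Pm (b/2+1) G r) {r : ℝ} (hr : 0 < r) :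
    HasDerivAt (fun r => (Io μ k r + r * k r) + b/2 * Io μ k r) (G r) r := by
  refine ((P_deriv (μ := μ) hb hk hG he hr).add ((Io_deriv (μ := μ) hk r).const_mul (b/2))).congr_deriv ?_
  ring

lemma solR_of_trunc {A ε R b lam μ : ℝ} {k : ℝ → ℝ} (hε : 0 < ε) (hk : Continuous k)
    (he : ∀ r ∈ Icc 0 R, k r = Pm (b/2+1) (Gk (Ft A ε R b lam) μ k) r)
    (hbd : ∀ r ∈ Icc 0 R, |Io μ k r| ≤ A ∧ |Io μ k r + r * k r| ≤ A ∧ ε ≤ 1 + r * Io μ k r) :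
    SolR b lam μ R k := by
  refine ⟨hk, fun r hr => lt_of_lt_of_le hε (hbd r hr).2.2, fun r hr => ?_⟩
  rw [he r hr]
  apply Pm_congr hr.1
  intro s hs
  have hs' : s ∈ Icc 0 R := ⟨hs.1, hs.2.trans hr.2⟩
  obtain ⟨h1, h2, h3⟩ := hbd s hs'
  exact Ft_eq hs' h1 h2 h3

lemma sign_trunc {A ε R b lam μ : ℝ} (hb : 0 < b) (hA : 0 ≤ A) {k : ℝ → ℝ} (hk : Continuous k)
    (hε : 0 < ε)
    (he : ∀ r, 0 ≤ r → k r = Pm (b/2+1) (Gk (Ft A ε R b lam) μ k) r) {r : ℝ} (hr : 0 < r)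
    (hP : Io μ k r + r * k r = 0) :
    HasDerivAt (fun r => Io μ k r + r * k r) (b * Io μ k r / (2 * r)) r := by
  refine (P_deriv (μ := μ) hb.le hk (Gk_cont (Ft_cont hε) hk) he hr).congr_deriv ?_
  have : Gk (Ft A ε R b lam) μ k r = 0 := by
    unfold Gk Ft
    rw [hP, cl_zero hA]; simp
  rw [this]
  have : k r = - Io μ k r / r := by field_simp; linarith
  rw [this]; field_simp; ring


lemma exists_pos {R b lam μ : ℝ} (hR : 0 < R) (hb : 1 ≤ b) (hl : 0 ≤ lam) (hμ : 0 < μ) :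
    ∃ k, SolR b lam μ R k := by
  have hb0 : 0 < b := by linarith
  set S₀ := μ * (1 + b/2) with hS₀
  have hS0 : 0 < S₀ := by positivity
  set A := 2 * S₀ * Real.exp (S₀ * R) with hA'
  have hA : 0 ≤ A := by positivity
  obtain ⟨L, hL, hlip⟩ := Ft_lip (A := A) (ε := 1) (R := R) (b := b) (lam := lam) one_pos hb0.le hl hA hR.le
  obtain ⟨k, hk, he⟩ := trunc_exists (Ft_cont one_pos) hL (Ft_bdd one_pos hb0.le hl hA) hlip
    (a := b/2+1) μ (by positivity)
  refine ⟨k, solR_of_trunc one_pos hk (fun r hr => he r hr.1) ?_⟩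
  have hGc := Gk_cont (Ft_cont (A := A) (ε := 1) (R := R) (b := b) (lam := lam) one_pos) (μ := μ) hk
  have hIc := Io_cont (μ := μ) hk
  have hs := sign_lemma (f := Io μ k) (P := fun r => Io μ k r + r * k r) hb0 hμ (by fun_prop)
    (by simp [Io_zero]) Io_zero (h_deriv hk)
    (fun r hr hP => sign_trunc hb0 hA hk one_pos he hr hP)
  have hh : ∀ r, 0 ≤ r → 1 ≤ 1 + r * Io μ k r := fun r hr => by
    have := mul_nonneg hr (hs r hr).2.le
    linarith
  have hSd := fun (r : ℝ) (hr : 0 < r) => S_deriv (μ := μ) hb0.le hk hGc he hr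
  have hhd := fun (r : ℝ) => (h_deriv (μ := μ) hk r).const_add 1
  have hanti : AntitoneOn (fun r => ((Io μ k r + r * k r) + b/2 * Io μ k r) / (1 + r * Io μ k r)) (Icc 0 R) := by
    have hd : ∀ x ∈ Ioo 0 R, HasDerivAt
        (fun r => ((Io μ k r + r * k r) + b/2 * Io μ k r) / (1 + r * Io μ k r)) _ x :=
      fun x hx => (hSd x hx.1).div (hhd x) (by have := hh x hx.1.le; positivity)
    refine antitoneOn_of_deriv_nonpos (convex_Icc _ _) ?_ ?_ ?_
    · refine ContinuousOn.div (by fun_prop) (by fun_prop) ?_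
      intro x hx
      have := hh x hx.1; positivity
    · rw [interior_Icc]
      exact fun x hx => (hd x hx).differentiableAt.differentiableWithinAt
    · rw [interior_Icc]
      intro x hx
      rw [(hd x hx).deriv]
      have h1 := hh x hx.1.le
      obtain ⟨h2, h3⟩ := hs x hx.1.le
      refine div_nonpos_of_nonpos_of_nonneg ?_ (sq_nonneg _)
      have e : Gk (Ft A 1 R b lam) μ k x * (1 + x * Io μ k x) =
        cl A (Io μ k x + x * k x) * (b * cl A (Io μ k x) + cl A (Io μ k x + x * k x) - lam) / 2 := by
        unfold Gk Ft
        rw [min_eq_right hx.2.le, max_eq_right hx.1.le, max_eq_left h1]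
        have : 1 + x * Io μ k x ≠ 0 := by positivity
        generalize 1 + x * Io μ k x = H at this ⊢
        field_simp
      rw [e]
      obtain ⟨c1, c2⟩ := cl_pos_le hA h2.le
      obtain ⟨c3, c4⟩ := cl_pos_le hA h3.le
      have : cl A (Io μ k x + x * k x) * (b * cl A (Io μ k x) + cl A (Io μ k x + x * k x) - lam) ≤
          (Io μ k x + x * k x) * (b * Io μ k x + (Io μ k x + x * k x)) := by
        calc _ ≤ cl A (Io μ k x + x * k x) * (b * Io μ k x + (Io μ k x + x * k x)) := by
              gcongr; 
              have := mul_le_mul_of_nonneg_left c4 hb0.le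
              linarith
          _ ≤ _ := by gcongr
      nlinarith [mul_pos h2 h2, mul_pos h2 h3]
  have hS : ∀ r ∈ Icc 0 R, (Io μ k r + r * k r) + b/2 * Io μ k r ≤ S₀ * (1 + r * Io μ k r) := by
    intro r hr
    have := hanti (left_mem_Icc.2 hR.le) hr hr.1
    simp only [Io_zero, zero_mul, add_zero, div_one] at this
    rw [div_le_iff₀ (by have := hh r hr.1; positivity)] at this
    refine this.trans (le_of_eq ?_)
    rw [hS₀]; ring
  have hanti2 : AntitoneOn (fun r => (1 + r * Io μ k r) * Real.exp (-(S₀ * r))) (Icc 0 R) := by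
    have hd : ∀ x, HasDerivAt (fun r => (1 + r * Io μ k r) * Real.exp (-(S₀ * r))) _ x :=
      fun x => (hhd x).mul (((hasDerivAt_id x).const_mul S₀).neg.exp)
    refine antitoneOn_of_deriv_nonpos (convex_Icc _ _) (by fun_prop) ?_ ?_
    · exact fun x hx => (hd x).differentiableAt.differentiableWithinAt
    · rw [interior_Icc]
      intro x hx
      rw [(hd x).deriv]
      have h1 := hS x ⟨hx.1.le, hx.2.le⟩
      have h3 := (hs x hx.1.le).2
      have h4 : 0 < b/2 * Io μ k x := by positivity
      simp only [id]
      have := Real.exp_pos (-(S₀ * x))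
      have h5 : (Io μ k x + x * k x) - S₀ * (1 + x * Io μ k x) ≤ 0 := by linarith
      simp only [Pi.neg_apply, mul_one]
      nlinarith
  intro r hr
  have hexp : 1 + r * Io μ k r ≤ Real.exp (S₀ * R) := by
    have := hanti2 (left_mem_Icc.2 hR.le) hr hr.1
    simp only [zero_mul, mul_zero, neg_zero, Real.exp_zero, add_zero, mul_one] at this
    rw [Real.exp_neg, ← div_eq_mul_inv, div_le_one (Real.exp_pos _)] at this
    exact this.trans (Real.exp_le_exp.2 (by nlinarith [hr.2]))
  obtain ⟨h2, h3⟩ := hs r hr.1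
  have h1 := hS r hr
  have h4 : S₀ * (1 + r * Io μ k r) ≤ S₀ * Real.exp (S₀ * R) := by gcongr
  rw [abs_of_pos h2, abs_of_pos h3]
  refine ⟨?_, ?_, hh r hr.1⟩ <;> nlinarith

lemma exists_neg {R b lam μ : ℝ} (hR : 0 < R) (hb : 1 ≤ b) (hl : 0 ≤ lam) (hμ : μ < 0) :
    ∃ k, SolR b lam μ R k := by
  have hb0 : 0 < b := by linarith
  set S₀ := μ * (1 + b/2) with hS₀
  have hS0 : S₀ < 0 := mul_neg_of_neg_of_pos hμ (by positivity)
  set A := -2 * S₀ with hA'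
  have hA : 0 ≤ A := by linarith
  set ε := Real.exp (2 * R * S₀ / b - 1) with hε'
  have hε : 0 < ε := Real.exp_pos _
  have hε1 : ε < 1 := by
    rw [hε', Real.exp_lt_one_iff]
    have : 2 * R * S₀ / b < 0 := div_neg_of_neg_of_pos (by nlinarith) hb0
    linarith
  obtain ⟨L, hL, hlip⟩ := Ft_lip (A := A) (ε := ε) (R := R) (b := b) (lam := lam) hε hb0.le hl hA hR.le
  obtain ⟨k, hk, he⟩ := trunc_exists (Ft_cont hε) hL (Ft_bdd hε hb0.le hl hA) hlip
    (a := b/2+1) μ (by positivity)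
  refine ⟨k, solR_of_trunc hε hk (fun r hr => he r hr.1) ?_⟩
  have hGc := Gk_cont (Ft_cont (A := A) (ε := ε) (R := R) (b := b) (lam := lam) hε) (μ := μ) hk
  have hIc := Io_cont (μ := μ) hk
  have hs : ∀ r, 0 ≤ r → Io μ k r + r * k r < 0 ∧ Io μ k r < 0 := by
    have := sign_lemma (μ := -μ) (f := fun r => -Io μ k r) (P := fun r => -(Io μ k r + r * k r)) hb0
      (by linarith) (by fun_prop) (by simp [Io_zero]) (by simp [Io_zero])
      (fun r => by
        have := (h_deriv (μ := μ) hk r).neg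
        refine (this.congr_of_eventuallyEq (Eventually.of_forall fun x => ?_))
        simp)
      (fun r hr hP => by
        refine (sign_trunc hb0 hA hk hε he hr (neg_eq_zero.1 hP)).neg.congr_deriv ?_
        ring)
    intro r hr
    have := this r hr
    exact ⟨by linarith [this.1], by linarith [this.2]⟩
  have hSd := fun (r : ℝ) (hr : 0 < r) => S_deriv (μ := μ) hb0.le hk hGc he hr
  have hhd := fun (r : ℝ) => (h_deriv (μ := μ) hk r).const_add 1
  have hmono : MonotoneOn (fun r => ((Io μ k r + r * k r) + b/2 * Io μ k r)) (Ici 0) := by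
    refine monotoneOn_of_deriv_nonneg (convex_Ici _) (by fun_prop) ?_ ?_
    · rw [interior_Ici]
      exact fun x hx => (hSd x hx).differentiableAt.differentiableWithinAt
    · rw [interior_Ici]
      intro x hx
      rw [(hSd x hx).deriv]
      obtain ⟨h2, h3⟩ := hs x (le_of_lt hx)
      unfold Gk Ft
      have c1 := cl_nonpos hA h2.le
      have c2 := cl_nonpos hA h3.le
      have hm : ε ≤ max (1 + max 0 (min R x) * Io μ k x) ε := le_max_right _ _
      refine div_nonneg (mul_nonneg_of_nonpos_of_nonpos c1 ?_) (by linarith)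
      nlinarith
  have hbd : ∀ r, 0 ≤ r → |Io μ k r| ≤ A ∧ |Io μ k r + r * k r| ≤ A := by
    intro r hr
    have := hmono self_mem_Ici (show r ∈ Ici 0 from hr) hr
    simp only [Io_zero, zero_mul, add_zero] at this
    have h0 : μ + b/2 * μ = S₀ := by rw [hS₀]; ring
    rw [h0] at this
    obtain ⟨h2, h3⟩ := hs r hr
    rw [abs_of_neg h2, abs_of_neg h3]
    constructor <;> nlinarith
  have hhanti : AntitoneOn (fun r => 1 + r * Io μ k r) (Ici 0) := by
    refine antitoneOn_of_deriv_nonpos (convex_Ici _) (by fun_prop) ?_ ?_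
    · exact fun x hx => (hhd x).differentiableAt.differentiableWithinAt
    · rw [interior_Ici]
      intro x hx
      rw [(hhd x).deriv]
      exact (hs x (le_of_lt hx)).1.le
  intro r hr
  refine ⟨(hbd r hr.1).1, (hbd r hr.1).2, ?_⟩
  by_contra! hlt
  obtain ⟨r₁, hr₁, hr₁e⟩ := intermediate_value_Icc' hr.1
    (f := fun r => 1 + r * Io μ k r) (by fun_prop) (show ε ∈ _ from ⟨hlt.le, by simpa using hε1.le⟩)
  simp only at hr₁e
  have hge : ∀ x ∈ Icc 0 r₁, ε ≤ 1 + x * Io μ k x := by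
    intro x hx
    rw [← hr₁e]
    exact hhanti hx.1 hr₁.1 hx.2
  have hmono2 : MonotoneOn (fun r => ((Io μ k r + r * k r) + b/2 * Io μ k r) +
      b / (2 * R) * (Real.log (1 + r * Io μ k r) - (1 + r * Io μ k r))) (Icc 0 r₁) := by
    have hd : ∀ x ∈ Ioo 0 r₁, HasDerivAt (fun r => ((Io μ k r + r * k r) + b/2 * Io μ k r) +
      b / (2 * R) * (Real.log (1 + r * Io μ k r) - (1 + r * Io μ k r))) _ x := fun x hx =>
      (hSd x hx.1).add ((((hhd x).log (by
        have := hge x ⟨hx.1.le, hx.2.le⟩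
        exact (hε.trans_le this).ne')).sub (hhd x)).const_mul (b / (2 * R)))
    refine monotoneOn_of_deriv_nonneg (convex_Icc _ _) ?_ ?_ ?_
    · refine ContinuousOn.add (by fun_prop) (ContinuousOn.mul (by fun_prop) (ContinuousOn.sub
        (ContinuousOn.log (by fun_prop) ?_) (by fun_prop)))
      intro x hx
      exact (hε.trans_le (hge x hx)).ne'
    · rw [interior_Icc]
      exact fun x hx => (hd x hx).differentiableAt.differentiableWithinAt
    · rw [interior_Icc]
      intro x hx
      rw [(hd x hx).deriv]
      have hxR : x ≤ R := hx.2.le.trans (hr₁.2.trans hr.2)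
      have hx1 := hge x ⟨hx.1.le, hx.2.le⟩
      obtain ⟨h2, h3⟩ := hs x hx.1.le
      obtain ⟨h4, h5⟩ := hbd x hx.1.le
      have e : Gk (Ft A ε R b lam) μ k x = Fu b lam x (Io μ k x) (Io μ k x + x * k x) :=
        Ft_eq ⟨hx.1.le, hxR⟩ h4 h5 hx1
      rw [e]; unfold Fu
      set f := Io μ k x
      set P := f + x * k x
      have hh : 0 < 1 + x * f := hε.trans_le hx1
      have e2 : P * (b * f + P - lam) / (2 * (1 + x * f)) +
          b / (2 * R) * (P / (1 + x * f) - P) =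
          (P * (P - lam) + b * (P * f) * (1 - x / R)) / (2 * (1 + x * f)) := by
        have hf : x * f = (1 + x * f) - 1 := by ring
        have e3 : P * (b * f + P - lam) = P * (P - lam) + b * (P * f) := by ring
        have e4 : b * (P * f) * (1 - x / R) = b * (P * f) - b * P / R * (x * f) := by ring
        rw [e3, e4, hf]
        generalize b * (P * f) = Y
        generalize P * (P - lam) = W
        simp only [add_sub_cancel]
        generalize 1 + x * f = H at hh ⊢
        field_simp; ring
      rw [e2]
      refine div_nonneg (add_nonneg (mul_nonneg_of_nonpos_of_nonpos h2.le (by linarith)) ?_) (by linarith)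
      have : x / R ≤ 1 := (div_le_one hR).2 hxR
      exact mul_nonneg (mul_nonneg hb0.le (mul_nonneg_of_nonpos_of_nonpos h2.le h3.le)) (by linarith)
  have h6 := hmono2 (left_mem_Icc.2 hr₁.1) (right_mem_Icc.2 hr₁.1) hr₁.1
  simp only [Io_zero, zero_mul, add_zero, Real.log_one, hr₁e] at h6
  obtain ⟨h2, h3⟩ := hs r₁ hr₁.1
  have h7 : Real.log ε = 2 * R * S₀ / b - 1 := by rw [hε', Real.log_exp]
  rw [h7] at h6
  have h8 : b / (2 * R) * (2 * R * S₀ / b - 1 - ε) = S₀ + b / (2*R) * (-1 - ε) := by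
    field_simp; ring
  rw [h8] at h6
  have h9 : 0 < b / (2*R) * ε := by positivity
  have h0 : μ + b/2 * μ = S₀ := by rw [hS₀]; ring
  nlinarith

lemma exists_SolR {R b lam : ℝ} (μ : ℝ) (hR : 0 < R) (hb : 1 ≤ b) (hl : 0 ≤ lam) :
    ∃ k, SolR b lam μ R k := by
  rcases lt_trichotomy μ 0 with h | h | h
  · exact exists_neg hR hb hl h
  · refine ⟨fun _ => 0, continuous_const, ?_, ?_⟩
    · intro r hr; simp [Io, h]
    · intro r hr; simp [Pm, Gk, Fu, Io, h]
  · exact exists_pos hR hb hl h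

lemma SolR.bounds {R b lam μ : ℝ} (hR : 0 ≤ R) {k : ℝ → ℝ} (h : SolR b lam μ R k) :
    ∃ A ε, 0 ≤ A ∧ 0 < ε ∧ ∀ r ∈ Icc 0 R, |Io μ k r| ≤ A ∧ |Io μ k r + r * k r| ≤ A ∧
      ε ≤ 1 + r * Io μ k r := by
  obtain ⟨hk, hp, he⟩ := h
  have hIc := Io_cont (μ := μ) hk
  obtain ⟨x, hx, hm⟩ := isCompact_Icc.exists_isMinOn (nonempty_Icc.2 hR)
    (f := fun r => 1 + r * Io μ k r) (by fun_prop)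
  obtain ⟨y, hy, hM⟩ := isCompact_Icc.exists_isMaxOn (nonempty_Icc.2 hR)
    (f := fun r => |Io μ k r| + |Io μ k r + r * k r|) (by fun_prop)
  refine ⟨|Io μ k y| + |Io μ k y + y * k y|, _, by positivity, hp x hx, fun r hr => ?_⟩
  have h1 : 1 + x * Io μ k x ≤ 1 + r * Io μ k r := hm hr
  have h2 : |Io μ k r| + |Io μ k r + r * k r| ≤ |Io μ k y| + |Io μ k y + y * k y| := hM hr
  exact ⟨by linarith [abs_nonneg (Io μ k r + r * k r)], by linarith [abs_nonneg (Io μ k r)], h1⟩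

lemma SolR.unique {R b lam μ : ℝ} (hR : 0 ≤ R) (hb : 0 ≤ b) (hl : 0 ≤ lam) {k₁ k₂ : ℝ → ℝ}
    (h₁ : SolR b lam μ R k₁) (h₂ : SolR b lam μ R k₂) : ∀ r ∈ Icc 0 R, k₁ r = k₂ r := by
  obtain ⟨A₁, ε₁, hA₁, hε₁, hb₁⟩ := h₁.bounds hR
  obtain ⟨A₂, ε₂, hA₂, hε₂, hb₂⟩ := h₂.bounds hR
  have hε : 0 < min ε₁ ε₂ := lt_min hε₁ hε₂
  have hA : 0 ≤ max A₁ A₂ := le_max_of_le_left hA₁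
  obtain ⟨L, hL, hlip⟩ := Ft_lip (A := max A₁ A₂) (ε := min ε₁ ε₂) (R := R) (b := b) (lam := lam)
    hε hb hl hA hR
  refine trunc_unique (Ft_cont hε) hL hlip (μ := μ) (a := b/2+1) (by positivity) h₁.1 h₂.1 hR ?_ ?_
  · intro r hr
    rw [h₁.2.2 r hr]
    refine Pm_congr hr.1 fun s hs => ?_
    have hs' : s ∈ Icc 0 R := ⟨hs.1, hs.2.trans hr.2⟩
    obtain ⟨a, b, c⟩ := hb₁ s hs'
    exact (Ft_eq hs' (a.trans (le_max_left _ _)) (b.trans (le_max_left _ _))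
      ((min_le_left _ _).trans c)).symm
  · intro r hr
    rw [h₂.2.2 r hr]
    refine Pm_congr hr.1 fun s hs => ?_
    have hs' : s ∈ Icc 0 R := ⟨hs.1, hs.2.trans hr.2⟩
    obtain ⟨a, b, c⟩ := hb₂ s hs'
    exact (Ft_eq hs' (a.trans (le_max_right _ _)) (b.trans (le_max_right _ _))
      ((min_le_right _ _).trans c)).symm

lemma SolR.mono {R R' b lam μ : ℝ} (hR : R ≤ R') {k : ℝ → ℝ} (h : SolR b lam μ R' k) :
    SolR b lam μ R k :=
  ⟨h.1, fun r hr => h.2.1 r ⟨hr.1, hr.2.trans hR⟩, fun r hr => h.2.2 r ⟨hr.1, hr.2.trans hR⟩⟩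

lemma exists_global {b lam : ℝ} (μ : ℝ) (hb : 1 ≤ b) (hl : 0 ≤ lam) :
    ∃ k, ∀ R, SolR b lam μ R k := by
  have hb0 : 0 ≤ b := by linarith
  choose kk hkk using fun N : ℕ => exists_SolR (R := (N:ℝ) + 1) μ (by positivity) hb hl
  set K : ℝ → ℝ := fun r => kk ⌈|r|⌉₊ |r| with hK
  have hKeq : ∀ (N : ℕ) r, |r| ≤ (N:ℝ) + 1 → K r = kk N |r| := by
    intro N r hr
    have hc := Nat.le_ceil |r|
    rcases le_total ⌈|r|⌉₊ N with h | h
    · refine (SolR.unique (R := |r|) (abs_nonneg r) hb0 hl ((hkk ⌈|r|⌉₊).mono (by linarith))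
        ((hkk N).mono hr)) _ (right_mem_Icc.2 (abs_nonneg r))
    · refine (SolR.unique (R := |r|) (abs_nonneg r) hb0 hl ((hkk ⌈|r|⌉₊).mono (by linarith))
        ((hkk N).mono hr)) _ (right_mem_Icc.2 (abs_nonneg r))
  have hKc : Continuous K := by
    rw [continuous_iff_continuousAt]
    intro r
    have h1 : ContinuousAt (fun x => kk ⌈|r|⌉₊ |x|) r :=
      ((hkk _).1.comp continuous_abs).continuousAt
    refine h1.congr ?_
    have : ∀ᶠ x in 𝓝 r, |x| < (⌈|r|⌉₊ : ℝ) + 1 :=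
      continuous_abs.continuousAt.eventually_lt continuousAt_const
        (by have := Nat.le_ceil |r|; linarith)
    filter_upwards [this] with x hx
    exact (hKeq _ x hx.le).symm
  refine ⟨K, fun R => ?_⟩
  set N := ⌈R⌉₊
  have hN : R ≤ N := Nat.le_ceil R
  have hIeq : ∀ r ∈ Icc 0 R, Io μ K r = Io μ (kk N) r := by
    intro r hr
    refine Io_congr hr.1 fun s hs => ?_
    have := hKeq N s (by rw [abs_of_nonneg hs.1]; linarith [hs.2, hr.2])
    rwa [abs_of_nonneg hs.1] at this
  have hKe : ∀ r ∈ Icc 0 R, K r = kk N r := by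
    intro r hr
    have := hKeq N r (by rw [abs_of_nonneg hr.1]; linarith [hr.2])
    rwa [abs_of_nonneg hr.1] at this
  refine ⟨hKc, fun r hr => ?_, fun r hr => ?_⟩
  · rw [hIeq r hr]
    exact (hkk N).2.1 r ⟨hr.1, by linarith [hr.2]⟩
  · rw [hKe r hr, (hkk N).2.2 r ⟨hr.1, by linarith [hr.2]⟩]
    refine Pm_congr hr.1 fun s hs => ?_
    have hs' : s ∈ Icc 0 R := ⟨hs.1, hs.2.trans hr.2⟩
    unfold Gk
    rw [hIeq s hs', hKe s hs']

lemma const_of_deriv_zero {D : ℝ → ℝ} (hc : ContinuousOn D (Ici 0))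
    (hd : ∀ r, 0 < r → HasDerivAt D 0 r) : ∀ r, 0 ≤ r → D r = D 0 := by
  intro r hr
  have hcc : ContinuousOn D (Icc 0 r) := hc.mono Icc_subset_Ici_self
  rcases hr.lt_or_eq with h | h
  · obtain ⟨c, hc1, hc2⟩ := exists_hasDerivAt_eq_slope D (fun _ => 0) h hcc
      (fun x hx => hd x hx.1)
    have h3 : r - 0 ≠ 0 := by linarith
    rw [eq_comm, div_eq_zero_iff] at hc2
    rcases hc2 with h2 | h2
    · linarith
    · exact absurd h2 h3
  · rw [← h]

lemma forward {n : ℕ} {lam μ : ℝ} (hn : 2 ≤ n) {K : ℝ → ℝ}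
    (h : ∀ R, SolR ((n:ℝ) - 1) lam μ R K) : IsSol n lam μ (fun r => 1 + r * Io μ K r) := by
  have hb : (1:ℝ) ≤ (n:ℝ) - 1 := by
    have : (2:ℝ) ≤ n := by exact_mod_cast hn
    linarith
  set b := (n:ℝ) - 1
  have hk : Continuous K := (h 0).1
  have hIc := Io_cont (μ := μ) hk
  have hpos : ∀ r, 0 ≤ r → 0 < 1 + r * Io μ K r := fun r hr => (h r).2.1 r ⟨hr, le_rfl⟩
  set G : ℝ → ℝ := fun s => Gk (Fu b lam) μ K |s| with hG'
  have hG : Continuous G := by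
    simp only [hG', Gk, Fu]
    refine Continuous.div (by fun_prop) (by fun_prop) ?_
    intro s
    have := hpos |s| (abs_nonneg s)
    positivity
  have he : ∀ r, 0 ≤ r → K r = Pm (b/2+1) G r := by
    intro r hr
    rw [(h r).2.2 r ⟨hr, le_rfl⟩]
    refine Pm_congr hr fun s hs => ?_
    simp only [hG', abs_of_nonneg hs.1]
  have hhd := fun (r : ℝ) => (h_deriv (μ := μ) hk r).const_add 1
  have hPd := fun (r : ℝ) (hr : 0 < r) => P_deriv (μ := μ) (by linarith) hk hG he hr
  have hder : deriv (fun r => 1 + r * Io μ K r) = fun r => Io μ K r + r * K r :=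
    funext fun r => (hhd r).deriv
  have hdiff : Differentiable ℝ (fun r => 1 + r * Io μ K r) := fun r => (hhd r).differentiableAt
  have hC1 : ContDiff ℝ 1 (fun r => 1 + r * Io μ K r) := by
    rw [contDiff_one_iff_deriv]
    refine ⟨hdiff, ?_⟩
    rw [hder]; fun_prop
  refine ⟨?_, hC1.contDiffOn, ?_, by simp, ?_⟩
  · rw [show (2 : WithTop ℕ∞) = 1 + 1 by norm_num, contDiffOn_succ_iff_deriv_of_isOpen isOpen_Ioi]
    refine ⟨hdiff.differentiableOn, by simp, ?_⟩
    rw [hder, show (1 : WithTop ℕ∞) = 0 + 1 by norm_num, contDiffOn_succ_iff_deriv_of_isOpen isOpen_Ioi]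
    refine ⟨fun r hr => (hPd r hr).differentiableAt.differentiableWithinAt, by simp, ?_⟩
    rw [contDiffOn_zero]
    have : ContinuousOn (fun r => -(b/2) * K r + G r) (Ioi 0) := by fun_prop
    exact this.congr fun r hr => (hPd r hr).deriv
  · intro r hr
    refine ⟨?_, hpos r hr.le⟩
    rw [hder, (hPd r hr).deriv]
    have hp := hpos r hr.le
    have e : 2 * (1 + r * Io μ K r) * G r =
        (Io μ K r + r * K r) * (b * Io μ K r + (Io μ K r + r * K r) - lam) := by
      simp only [hG', abs_of_pos hr, Gk, Fu]
      generalize 1 + r * Io μ K r = H at hp ⊢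
      field_simp
    linear_combination r^2 * e
  · rw [(hhd 0).hasDerivWithinAt.derivWithin (uniqueDiffOn_Ici 0 0 self_mem_Ici)]
    simp [Io_zero]

lemma backward {n : ℕ} {lam μ : ℝ} (hn : 2 ≤ n) {g : ℝ → ℝ} (h : IsSol n lam μ g) :
    ∃ k, (∀ R, SolR ((n:ℝ) - 1) lam μ R k) ∧ ∀ r, 0 ≤ r → g r = 1 + r * Io μ k r := by
  obtain ⟨hC2, hC1, hode, h0, hd0⟩ := h
  have hb : (1:ℝ) ≤ (n:ℝ) - 1 := by
    have : (2:ℝ) ≤ n := by exact_mod_cast hn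
    linarith
  set b := (n:ℝ) - 1
  set P : ℝ → ℝ := fun r => derivWithin g (Ici 0) |r| with hP'
  have hPc : Continuous P := by
    have := hC1.continuousOn_derivWithin (uniqueDiffOn_Ici 0) le_rfl
    exact this.comp_continuous continuous_abs fun x => abs_nonneg x
  have hdg : DifferentiableOn ℝ g (Ici 0) := hC1.differentiableOn (by norm_num)
  have hg : ∀ r, 0 < r → HasDerivAt g (P r) r := by
    intro r hr
    have h1 := (hdg r hr.le).hasDerivWithinAt
    simp only [hP', abs_of_pos hr]
    exact h1.hasDerivAt (Ici_mem_nhds hr)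
  have hPderiv : ∀ r, 0 < r → P r = deriv g r := fun r hr => (hg r hr).deriv.symm
  have hP2 : ∀ r, 0 < r → HasDerivAt P (deriv (deriv g) r) r := by
    intro r hr
    rw [show (2 : WithTop ℕ∞) = 1 + 1 by norm_num,
      contDiffOn_succ_iff_deriv_of_isOpen isOpen_Ioi] at hC2
    have h2 := hC2.2.2.differentiableOn (by norm_num)
    have h3 := ((h2 r hr).differentiableAt (Ioi_mem_nhds hr)).hasDerivAt
    refine h3.congr_of_eventuallyEq ?_
    filter_upwards [Ioi_mem_nhds hr] with x hx
    exact hPderiv x hx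
  set f : ℝ → ℝ := fun r => ∫ τ in (0:ℝ)..1, P (r * τ) with hf'
  have hfc : Continuous f := by
    apply intervalIntegral.continuous_parametric_intervalIntegral_of_continuous'
    exact hPc.comp (by fun_prop)
  have hf0 : f 0 = μ := by
    simp [hf', hP', hd0]
  have hP0 : P 0 = μ := by simp [hP', hd0]
  have hintP : ∀ r, HasDerivAt (fun r => ∫ x in (0:ℝ)..r, P x) (P r) r := fun r =>
    intervalIntegral.integral_hasDerivAt_right (hPc.intervalIntegrable _ _)
      (hPc.stronglyMeasurableAtFilter _ _) hPc.continuousAt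
  have hrf : ∀ r, r * f r = ∫ x in (0:ℝ)..r, P x := by
    intro r
    have := intervalIntegral.mul_integral_comp_mul_left (a := 0) (b := 1) (f := P) (c := r)
    rw [mul_zero, mul_one] at this
    exact this
  have hgf : ∀ r, 0 ≤ r → g r = 1 + r * f r := by
    intro r hr
    have := const_of_deriv_zero (D := fun r => g r - ∫ x in (0:ℝ)..r, P x)
      (hdg.continuousOn.sub (continuous_iff_continuousAt.2 fun r => (hintP r).continuousAt).continuousOn)
      (fun r hr => ((hg r hr).sub (hintP r)).congr_deriv (sub_self _)) r hr
    simp only [intervalIntegral.integral_same, h0, sub_zero] at this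
    rw [hrf]; linarith
  have hpos : ∀ r, 0 ≤ r → 0 < 1 + r * f r := by
    intro r hr
    rcases hr.lt_or_eq with h | h
    · rw [← hgf r hr]; exact (hode r h).2
    · rw [← h]; norm_num
  have hfd : ∀ r, 0 < r → HasDerivAt f ((P r - f r) / r) r := by
    intro r hr
    have h1 := (hintP r).div (hasDerivAt_id r) hr.ne'
    have h2 : (fun r => (∫ x in (0:ℝ)..r, P x) / id r) =ᶠ[𝓝 r] f := by
      filter_upwards [Ioi_mem_nhds hr] with x hx
      have : x ≠ 0 := ne_of_gt hx
      rw [← hrf]; simp only [id]; field_simp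
    refine (h1.congr_of_eventuallyEq h2.symm).congr_deriv ?_
    simp only [id]
    rw [← hrf]; field_simp
  set G : ℝ → ℝ := fun s => Fu b lam |s| (f |s|) (P |s|) with hG'
  have hG : Continuous G := by
    simp only [hG', Fu]
    refine Continuous.div (by fun_prop) (by fun_prop) ?_
    intro s
    have := hpos |s| (abs_nonneg s)
    positivity
  set a := b/2 + 1 with ha'
  have ha : 0 < a := by positivity
  set k := Pm a G with hk'
  have hk : Continuous k := Pm_cont ha.le hG
  have hrc : Continuous (fun s : ℝ => s ^ a * G s) := (Real.continuous_rpow_const ha.le).mul hG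
  have hintG : ∀ r, HasDerivAt (fun r => ∫ s in (0:ℝ)..r, s ^ a * G s) (r ^ a * G r) r := fun r =>
    intervalIntegral.integral_hasDerivAt_right (hrc.intervalIntegrable _ _)
      (hrc.stronglyMeasurableAtFilter _ _) hrc.continuousAt
  have hk1 : ∀ r, 0 < r → P r - f r = r * k r := by
    intro r hr
    have := const_of_deriv_zero (D := fun r => r ^ a * (P r - f r) - ∫ s in (0:ℝ)..r, s ^ a * G s)
      ((((Real.continuous_rpow_const ha.le).mul (hPc.sub hfc)).sub
        (continuous_iff_continuousAt.2 fun r => (hintG r).continuousAt)).continuousOn)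
      (fun r hr => by
        have h1 : HasDerivAt (fun r : ℝ => r ^ a) (a * r ^ (a - 1)) r :=
          Real.hasDerivAt_rpow_const (Or.inl hr.ne')
        refine ((h1.mul ((hP2 r hr).sub (hfd r hr))).sub (hintG r)).congr_deriv ?_
        have e1 : r ^ a = r ^ (a-1) * r := by
          rw [← Real.rpow_add_one hr.ne']; congr 1; ring
        have ho := (hode r hr).1
        rw [← hPderiv r hr, hgf r hr.le] at ho
        have hp := hpos r hr.le
        have hGr : G r = Fu b lam r (f r) (P r) := by simp only [hG', abs_of_pos hr]
        have e2 : 2 * (1 + r * f r) * G r = P r * (b * f r + P r - lam) := by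
          rw [hGr, Fu]
          generalize 1 + r * f r = H at hp ⊢
          field_simp
        have e3 : a * (P r - f r) + r * (deriv (deriv g) r - (P r - f r) / r) - r * G r = 0 := by
          have e4 : r * ((P r - f r) / r) = P r - f r := by field_simp
          have e5 : 2 * (1 + r * f r) * r * (a * (P r - f r) + (r * deriv (deriv g) r - (P r - f r)) - r * G r) = 0 := by
            rw [ha']
            linear_combination ho - r^2 * e2
          have : a * (P r - f r) + (r * deriv (deriv g) r - (P r - f r)) - r * G r = 0 :=
            (mul_eq_zero.1 e5).resolve_left (by positivity)
          linear_combination this - e4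
        rw [e1]
        simp only [Pi.sub_apply]
        linear_combination r ^ (a-1) * e3) r hr.le
    simp only [intervalIntegral.integral_same, Real.zero_rpow ha.ne', zero_mul, sub_zero] at this
    have ep : r ^ (a + 1) = r ^ a * r := Real.rpow_add_one hr.ne' a
    rw [← Pm_eq hr, ep] at this
    have hra : 0 < r ^ a := Real.rpow_pos_of_pos hr a
    have h2 : r ^ a * (P r - f r - r * k r) = 0 := by rw [hk']; linarith
    have := (mul_eq_zero.1 h2).resolve_left hra.ne'
    linarith
  have hfI : ∀ r, 0 ≤ r → f r = Io μ k r := by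
    intro r hr
    have := const_of_deriv_zero (D := fun r => f r - Io μ k r)
      (hfc.sub (Io_cont hk)).continuousOn
      (fun r hr => ((hfd r hr).sub (Io_deriv hk r)).congr_deriv (by
        rw [hk1 r hr]; field_simp; simp)) r hr
    simp only [hf0, Io_zero] at this
    linarith
  have hPI : ∀ r, 0 ≤ r → P r = Io μ k r + r * k r := by
    intro r hr
    rcases hr.lt_or_eq with h | h
    · rw [← hfI r hr, ← hk1 r h]; ring
    · rw [← h]; simp [Io_zero, hP0]
  refine ⟨k, fun R => ⟨hk, fun r hr => ?_, fun r hr => ?_⟩, fun r hr => ?_⟩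
  · rw [← hfI r hr.1]; exact hpos r hr.1
  · refine Pm_congr hr.1 fun s hs => ?_
    simp only [hG', abs_of_nonneg hs.1, Gk]
    rw [hfI s hs.1, hPI s hs.1]
  · rw [← hfI r hr]; exact hgf r hr

theorem existence_uniqueness (lam μ₁ : ℝ) (n : ℕ) (hlam : 0 ≤ lam)
    (hn2 : 2 ≤ n) (hn4 : n ≤ 4) :
    ∃ h : ℝ → ℝ, IsSol n lam μ₁ h ∧
      ∀ g : ℝ → ℝ, IsSol n lam μ₁ g → Set.EqOn g h (Set.Ici 0) := by
  have hb : (1:ℝ) ≤ (n:ℝ) - 1 := by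
    have : (2:ℝ) ≤ n := by exact_mod_cast hn2
    linarith
  obtain ⟨K, hK⟩ := exists_global μ₁ hb hlam
  refine ⟨_, forward hn2 hK, ?_⟩
  intro g hg r hr
  obtain ⟨k, hk, hgk⟩ := backward hn2 hg
  have hr' : 0 ≤ r := hr
  simp only
  rw [hgk r hr']
  congr 2
  exact Io_congr hr' (SolR.unique hr' (by linarith) hlam (hk r) (hK r))
end

section
/- Let λ ≥ 0, μ₁ ∈ ℝ, n ≥ 2 an integer, and let h ∈ C²((0,∞)) ∩ C¹([0,∞)) be a solution of 2r²h(r)h''(r) = (n-1)h(r)(h(r)-1) + r h'(r)(r h'(r) - λr - (n-1)), h(r) > 0 for r > 0, with h(0) = 1, h'(0) = μ₁. Then: if μ₁ > 0, then h(r) > 1 and h'(r) > 0 for all r > 0; if μ₁ < 0, then 0 < h(r) < 1 and h'(r) < 0 for all r > 0. -/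
open Set Filter Topology

lemma aux_pos (g g1 g2 : ℝ → ℝ) (g0 : g 0 = 0) (hc : ContinuousOn g (Ici 0))
    (hd : ∀ r, 0 < r → HasDerivAt g (g1 r) r)
    (hd2 : ∀ r, 0 < r → HasDerivAt g1 (g2 r) r)
    (hnear : ∀ᶠ r in 𝓝[>] (0:ℝ), 0 < g1 r)
    (hode : ∀ r, 0 < r → g1 r = 0 → 0 < g r → 0 < g2 r) :
    ∀ r, 0 < r → 0 < g r ∧ 0 < g1 r := by
  have mono : ∀ b, 0 < b → (∀ x, 0 < x → x < b → 0 < g1 x) → 0 < g b := by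
    intro b hb hx
    have hm : StrictMonoOn g (Icc 0 b) := by
      apply strictMonoOn_of_deriv_pos (convex_Icc 0 b) (hc.mono Icc_subset_Ici_self)
      intro x hxi
      rw [interior_Icc] at hxi
      rw [(hd x hxi.1).deriv]
      exact hx x hxi.1 hxi.2
    have := hm ⟨le_rfl, hb.le⟩ ⟨hb.le, le_rfl⟩ hb
    rwa [g0] at this
  have key : ∀ r, 0 < r → 0 < g1 r := by
    by_contra! hcon
    obtain ⟨a, ha, hga⟩ := hcon
    obtain ⟨e, he, hee⟩ := mem_nhdsGT_iff_exists_Ioo_subset.1 hnear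
    have he0 : (0:ℝ) < e := he
    have hce : ∀ x, 0 < x → x < e → 0 < g1 x := fun x h1 h2 => hee ⟨h1, h2⟩
    have hea : e ≤ a := by
      by_contra! hlt
      exact absurd (hce a ha hlt) (not_lt.2 hga)
    have hcont : ContinuousOn g1 (Icc e a) := fun x hx =>
      (hd2 x (he0.trans_le hx.1)).continuousAt.continuousWithinAt
    have hcomp : IsCompact (Icc e a ∩ g1 ⁻¹' Iic 0) :=
      isCompact_Icc.of_isClosed_subset
        (hcont.preimage_isClosed_of_isClosed isClosed_Icc isClosed_Iic) inter_subset_left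
    obtain ⟨b, hb⟩ := hcomp.exists_isLeast ⟨a, ⟨hea, le_rfl⟩, hga⟩
    have hbe : e ≤ b := hb.1.1.1
    have hb0 : 0 < b := he0.trans_le hbe
    have hb1 : g1 b ≤ 0 := hb.1.2
    have hlt : ∀ x, 0 < x → x < b → 0 < g1 x := by
      intro x hx hxb
      by_contra! hneg
      by_cases hxe : x < e
      · exact absurd (hce x hx hxe) (not_lt.2 hneg)
      · exact absurd (hb.2 ⟨⟨not_lt.1 hxe, hxb.le.trans hb.1.1.2⟩, hneg⟩) (not_le.2 hxb)
    have hev : ∀ᶠ x in 𝓝[<] b, 0 < g1 x := by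
      filter_upwards [Ioo_mem_nhdsLT hb0] with x hx using hlt x hx.1 hx.2
    have hge : 0 ≤ g1 b :=
      ge_of_tendsto ((hd2 b hb0).continuousAt.tendsto.mono_left nhdsWithin_le_nhds)
        (hev.mono fun x hx => hx.le)
    have hz : g1 b = 0 := le_antisymm hb1 hge
    have h2 := hode b hb0 hz (mono b hb0 hlt)
    have hs := (hasDerivAt_iff_tendsto_slope.1 (hd2 b hb0)).eventually (lt_mem_nhds h2)
    have hs' : ∀ᶠ x in 𝓝[<] b, 0 < slope g1 b x :=
      hs.filter_mono (nhdsWithin_mono _ fun x hx => ne_of_lt hx)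
    obtain ⟨x, ⟨h3, h4⟩, h5⟩ := ((hs'.and hev).and self_mem_nhdsWithin).exists
    have h5' : x < b := h5
    rw [slope_def_field, hz, sub_zero] at h3
    have := div_neg_of_pos_of_neg h4 (sub_neg.2 h5')
    linarith
  exact fun r hr => ⟨mono r hr fun x hx _ => key x hx, key r hr⟩

theorem sign_of_solution (lam μ₁ : ℝ) (n : ℕ) (hlam : 0 ≤ lam) (hn2 : 2 ≤ n)
    (h : ℝ → ℝ) (hsol : IsSol n lam μ₁ h) :
    (0 < μ₁ → ∀ r : ℝ, 0 < r → 1 < h r ∧ 0 < deriv h r) ∧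
    (μ₁ < 0 → ∀ r : ℝ, 0 < r → 0 < h r ∧ h r < 1 ∧ deriv h r < 0) := by
  obtain ⟨hC2, hC1, hode, h0, hμ⟩ := hsol
  have hn : (0:ℝ) < (n:ℝ) - 1 := by
    have : (2:ℝ) ≤ n := by exact_mod_cast hn2
    linarith
  have hd : ∀ r, 0 < r → HasDerivAt h (deriv h r) r := fun r hr =>
    ((hC2.differentiableOn (by norm_num)).differentiableAt (Ioi_mem_nhds hr)).hasDerivAt
  have hC2' : ContDiffOn ℝ 1 (deriv h) (Ioi 0) :=
    hC2.deriv_of_isOpen isOpen_Ioi (by norm_num)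
  have hd2 : ∀ r, 0 < r → HasDerivAt (deriv h) (deriv (deriv h) r) r := fun r hr =>
    ((hC2'.differentiableOn (by norm_num)).differentiableAt (Ioi_mem_nhds hr)).hasDerivAt
  have hlim : Tendsto (deriv h) (𝓝[>] 0) (𝓝 μ₁) := by
    have h1 := (hC1.continuousOn_derivWithin (uniqueDiffOn_Ici 0) le_rfl) 0 self_mem_Ici
    have h2 : Tendsto (derivWithin h (Ici 0)) (𝓝[>] 0) (𝓝 μ₁) := by
      rw [← hμ]
      exact h1.mono_left (nhdsWithin_mono _ Ioi_subset_Ici_self)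
    refine h2.congr' ?_
    filter_upwards [self_mem_nhdsWithin] with x hx
    exact derivWithin_of_mem_nhds (Ici_mem_nhds hx)
  have hz : ∀ r, 0 < r → deriv h r = 0 →
      2 * r ^ 2 * deriv (deriv h) r = ((n : ℝ) - 1) * (h r - 1) := by
    intro r hr hr0
    obtain ⟨e, hp⟩ := hode r hr
    rw [hr0] at e
    apply mul_left_cancel₀ hp.ne'
    linarith
  constructor
  · intro hpos r hr
    have := aux_pos (fun x => h x - 1) (deriv h) (deriv (deriv h)) (by simp [h0])
      (hC1.continuousOn.sub continuousOn_const) (fun r hr => (hd r hr).sub_const 1) hd2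
      (hlim.eventually (lt_mem_nhds hpos))
      (by
        intro r hr h1 h2
        have e := hz r hr h1
        have : 0 < 2 * r ^ 2 * deriv (deriv h) r := e ▸ mul_pos hn h2
        exact pos_of_mul_pos_right this (by positivity)) r hr
    exact ⟨by linarith [this.1], this.2⟩
  · intro hneg r hr
    have := aux_pos (fun x => 1 - h x) (fun x => - deriv h x) (fun x => - deriv (deriv h) x)
      (by simp [h0])
      (continuousOn_const.sub hC1.continuousOn) (fun r hr => (hd r hr).const_sub 1)
      (fun r hr => (hd2 r hr).neg)
      ((hlim.eventually (gt_mem_nhds hneg)).mono fun x hx => neg_pos.2 hx)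
      (by
        intro r hr h1 h2
        have e := hz r hr (neg_eq_zero.1 h1)
        have : 0 < 2 * r ^ 2 * (- deriv (deriv h) r) := by
          have := mul_pos hn h2
          linarith
        exact pos_of_mul_pos_right this (by positivity)) r hr
    exact ⟨(hode r hr).2, by linarith [this.1], by linarith [this.2]⟩
end
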